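/- Fix δ ∈ (0,1), C > 0, and ε ∈ (0, δ/2). For all sufficiently large n the following holds. Consider the relaxed adaptive allocation model placing ⌊n/k⌋ balls into n bins, with pool size at most 2^m, m ≥ log n, m ≤ n^{1−δ}, 2 ≤ k ≤ (log n)^C, and all pool distributions having point masses at most k/n. Then with probability at least 1 − e^{−m}, the maximal load after ⌊n/k⌋ rounds is at least (1−ε)·log(n/m) / (log k + log log(n/m)). In particular, when m = n^{1−δ} and k ≤ polylog(n), the maximal load is of order log n / log log n with high probability, the same order as a completely random allocation. -/

import Mathlib

open MeasureTheory Finset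

/-- The load of bin `i` after `t` rounds, when ball `s` is placed in bin `J s ω`. -/
def binLoad {Ω : Type*} {n : ℕ} (J : ℕ → Ω → Fin n) (t : ℕ) (i : Fin n) (ω : Ω) : ℕ :=
  ((Finset.range t).filter fun s => J s ω = i).card

/-!
Count, with weights, the `j`-subsets of balls sharing a bin. A new ball in bin `i` adds as many
`(j + 1)`-subsets as there were `j`-subsets in bin `i`; seen as a reward of that ball, this quantity
has as its conditional mean the count of `j`-subsets weighted by the current strategy. An
exponential supermartingale shows that the total reward is, up to a small error, at least half the
sum of these means. Iterating this bound peels off one strategy per step, so the weights that occur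
are products of fewer than `ℓ` strategies of the pool, and a union bound over at most `2 ^ (m * ℓ)`
of them makes all errors small simultaneously.

What remains of the count of `ℓ`-subsets is an elementary symmetric polynomial, of degree `ℓ`, in
the probabilities that the successive strategies give to a bin. Since these are at most `k / n`, it
is at least `(x - ℓ * k / n) ^ ℓ / ℓ !`, with `x` their sum; this is convex in `x`, so spreading the
total mass `⌊n / k⌋` evenly over the bins is the worst case. The count is therefore positive, and
some bin has load at least `ℓ`, as long as `m * ℓ * (8 * k * ℓ) ^ ℓ` is small compared with `n`.
-/

theorem integrable_exp_of_le {Ω : Type*} {mΩ : MeasurableSpace Ω} {μ : Measure Ω}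
    [IsFiniteMeasure μ] {f : Ω → ℝ} (hf : AEMeasurable f μ) {c : ℝ} (hc : ∀ ω, f ω ≤ c) :
    Integrable (fun ω => Real.exp (f ω)) μ := by
  refine .of_bound hf.exp.aestronglyMeasurable (Real.exp c) (.of_forall fun ω => ?_)
  rw [Real.norm_eq_abs, Real.abs_exp]
  exact Real.exp_le_exp.2 (hc ω)

theorem sum_mul_le_one {ι : Type*} [Fintype ι] {q y : ι → ℝ} (hq : q ∈ stdSimplex ℝ ι)
    (hy : ∀ i, y i ≤ 1) : ∑ i, q i * y i ≤ 1 :=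
  hq.2 ▸ Finset.sum_le_sum fun i _ => mul_le_of_le_one_right (hq.1 i) (hy i)

theorem sum_mul_exp_neg_le_exp_neg_half_sum {ι : Type*} [Fintype ι] {q y : ι → ℝ}
    (hq : q ∈ stdSimplex ℝ ι) (hy : ∀ i, y i ∈ Set.Icc 0 1) :
    ∑ i, q i * Real.exp (-y i) ≤ Real.exp (-((∑ i, q i * y i) / 2)) := by
  have exp_neg_le (i : ι) : Real.exp (-y i) ≤ 1 - y i / 2 := by
    have chord := convexOn_exp.2 (Set.mem_univ (-1)) (Set.mem_univ 0) (hy i).1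
      (sub_nonneg.2 (hy i).2) (by ring)
    simp only [smul_eq_mul, mul_neg, mul_one, mul_zero, add_zero, Real.exp_zero] at chord
    nlinarith [Real.exp_neg_one_lt_half, (hy i).1]
  calc ∑ i, q i * Real.exp (-y i) ≤ ∑ i, q i * (1 - y i / 2) :=
        Finset.sum_le_sum fun i _ => mul_le_mul_of_nonneg_left (exp_neg_le i) (hq.1 i)
    _ = 1 - (∑ i, q i * y i) / 2 := by
        simp only [mul_sub, mul_one, Finset.sum_sub_distrib, hq.2, Finset.sum_div, mul_div_assoc]
    _ ≤ Real.exp (-((∑ i, q i * y i) / 2)) := Real.one_sub_le_exp_neg _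

/-- Half of the compensator of the total reward `∑ s < t, Y s (J s)`, minus that total reward, when
a ball falling into bin `i` in round `s` earns the reward `Y s i`. -/
noncomputable def shortfall {Ω ι : Type*} [Fintype ι] (Q : ℕ → Ω → ι → ℝ) (J : ℕ → Ω → ι)
    (Y : ℕ → Ω → ι → ℝ) (t : ℕ) (ω : Ω) : ℝ :=
  ∑ s ∈ range t, ((∑ i, Q s ω i * Y s ω i) / 2 - Y s ω (J s ω))

theorem shortfall_le {Ω ι : Type*} [Fintype ι] {Q : ℕ → Ω → ι → ℝ} {J : ℕ → Ω → ι}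
    {Y : ℕ → Ω → ι → ℝ} {ω : Ω} (hQ : ∀ s, Q s ω ∈ stdSimplex ℝ ι)
    (hY : ∀ s i, Y s ω i ∈ Set.Icc 0 1) (t : ℕ) : shortfall Q J Y t ω ≤ t := by
  have summand_le (s : ℕ) : (∑ i, Q s ω i * Y s ω i) / 2 - Y s ω (J s ω) ≤ 1 := by
    linarith [sum_mul_le_one (hQ s) fun i => (hY s i).2, (hY s (J s ω)).1]
  simpa [shortfall] using Finset.sum_le_card_nsmul (range t) _ 1 fun s _ => summand_le s

/-- An adaptive allocation of balls into the bins `ι`: in round `t` a strategy `Q t ω`, that is, a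
probability distribution on the bins, is chosen from the information `ℱ t`, and given `ℱ t` the
ball of that round falls into the bin `J t ω` with distribution `Q t ω`. Rounds are numbered from
`0`, so `ℱ t` describes the history before round `t`. -/
structure IsAllocation {Ω ι : Type*} {mΩ : MeasurableSpace Ω} [Fintype ι] [DecidableEq ι]
    [MeasurableSpace ι] (μ : Measure Ω) (ℱ : Filtration ℕ mΩ) (Q : ℕ → Ω → ι → ℝ)
    (J : ℕ → Ω → ι) : Prop where
  strategy_mem (t : ℕ) (ω : Ω) : Q t ω ∈ stdSimplex ℝ ι
  measurable_strategy (t : ℕ) (i : ι) : Measurable[ℱ t] fun ω => Q t ω i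
  measurable_position (t : ℕ) : Measurable[ℱ (t + 1)] (J t)
  condExp_position (t : ℕ) (i : ι) :
    μ[(fun ω => if J t ω = i then (1 : ℝ) else 0) | ℱ t] =ᵐ[μ] fun ω => Q t ω i

namespace IsAllocation

variable {Ω ι : Type*} {mΩ : MeasurableSpace Ω} [Fintype ι] [DecidableEq ι] [MeasurableSpace ι]
  [MeasurableSingletonClass ι] {μ : Measure Ω} {ℱ : Filtration ℕ mΩ} {Q : ℕ → Ω → ι → ℝ}
  {J : ℕ → Ω → ι} {Y : ℕ → Ω → ι → ℝ}

theorem measurable_indicator_position (h : IsAllocation μ ℱ Q J) (t : ℕ) (i : ι) :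
    Measurable[ℱ (t + 1)] fun ω => if J t ω = i then (1 : ℝ) else 0 :=
  (measurable_of_countable fun j => if j = i then (1 : ℝ) else 0).comp (h.measurable_position t)

theorem measurable_apply_position (h : IsAllocation μ ℱ Q J) {t : ℕ} {G : Ω → ι → ℝ}
    (hG : ∀ i, Measurable[ℱ t] fun ω => G ω i) : Measurable[ℱ (t + 1)] fun ω => G ω (J t ω) := by
  have apply_eq_sum (ω : Ω) : G ω (J t ω) = ∑ i, G ω i * if J t ω = i then (1 : ℝ) else 0 := by
    simp
  simp_rw [apply_eq_sum]
  exact Finset.measurable_fun_sum _ fun i _ =>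
    ((hG i).mono (ℱ.mono t.le_succ) le_rfl).mul (h.measurable_indicator_position t i)

theorem integral_apply_position [IsFiniteMeasure μ] (h : IsAllocation μ ℱ Q J) {t : ℕ}
    {G : Ω → ι → ℝ} (hG : ∀ i, Measurable[ℱ t] fun ω => G ω i)
    (hGint : ∀ i, Integrable (fun ω => G ω i) μ) :
    Integrable (fun ω => ∑ i, Q t ω i * G ω i) μ ∧
      ∫ ω, G ω (J t ω) ∂μ = ∫ ω, ∑ i, Q t ω i * G ω i ∂μ := by
  set I : ι → Ω → ℝ := fun i ω => if J t ω = i then 1 else 0 with hI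
  have indicator_aesm (i : ι) : AEStronglyMeasurable (I i) μ :=
    ((h.measurable_indicator_position t i).mono (ℱ.le _) le_rfl).aestronglyMeasurable
  have indicator_bound (i : ι) : ∀ᵐ ω ∂μ, ‖I i ω‖ ≤ 1 :=
    .of_forall fun ω => by simp only [hI]; split_ifs <;> simp
  have integrable_indicator (i : ι) : Integrable (I i) μ :=
    .of_bound (indicator_aesm i) 1 (indicator_bound i)
  have integrable_prod (i : ι) : Integrable (I i * fun ω => G ω i) μ :=
    (hGint i).bdd_mul (indicator_aesm i) (indicator_bound i)
  have condExp_prod (i : ι) :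
      μ[I i * (fun ω => G ω i) | ℱ t] =ᵐ[μ] fun ω => Q t ω i * G ω i :=
    (condExp_mul_of_stronglyMeasurable_right (hG i).stronglyMeasurable (integrable_prod i)
      (integrable_indicator i)).trans <| (h.condExp_position t i).mul (.refl _ _)
  have integrable_strategy_mul (i : ι) : Integrable (fun ω => Q t ω i * G ω i) μ :=
    integrable_condExp.congr (condExp_prod i)
  refine ⟨integrable_finsetSum _ fun i _ => integrable_strategy_mul i, ?_⟩
  calc ∫ ω, G ω (J t ω) ∂μ = ∫ ω, ∑ i, I i ω * G ω i ∂μ := by simp [hI]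
    _ = ∑ i, ∫ ω, I i ω * G ω i ∂μ := integral_finsetSum _ fun i _ => integrable_prod i
    _ = ∑ i, ∫ ω, Q t ω i * G ω i ∂μ := Finset.sum_congr rfl fun i _ =>
        (integral_condExp (ℱ.le t)).symm.trans (integral_congr_ae (condExp_prod i))
    _ = ∫ ω, ∑ i, Q t ω i * G ω i ∂μ :=
        (integral_finsetSum _ fun i _ => integrable_strategy_mul i).symm

theorem measurable_shortfall (h : IsAllocation μ ℱ Q J)
    (hY : ∀ t i, Measurable[ℱ t] fun ω => Y t ω i) (t : ℕ) :
    Measurable[ℱ t] (shortfall Q J Y t) := by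
  refine Finset.measurable_fun_sum _ fun s hs => ?_
  have hst : s + 1 ≤ t := mem_range.1 hs
  have compensator : Measurable[ℱ s] fun ω => (∑ i, Q s ω i * Y s ω i) / 2 :=
    (Finset.measurable_fun_sum _ fun i _ => (h.measurable_strategy s i).mul (hY s i)).div_const 2
  exact (compensator.mono (ℱ.mono (s.le_succ.trans hst)) le_rfl).sub
    ((h.measurable_apply_position (hY s)).mono (ℱ.mono hst) le_rfl)

theorem integrable_exp_shortfall [IsFiniteMeasure μ] (h : IsAllocation μ ℱ Q J)
    (hY : ∀ t ω i, Y t ω i ∈ Set.Icc 0 1) (hYm : ∀ t i, Measurable[ℱ t] fun ω => Y t ω i)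
    (t : ℕ) : Integrable (fun ω => Real.exp (shortfall Q J Y t ω)) μ :=
  integrable_exp_of_le ((h.measurable_shortfall hYm t).mono (ℱ.le t) le_rfl).aemeasurable
    fun ω => shortfall_le (h.strategy_mem · ω) (hY · ω) t

theorem integral_exp_shortfall_le_one [IsProbabilityMeasure μ] (h : IsAllocation μ ℱ Q J)
    (hY : ∀ t ω i, Y t ω i ∈ Set.Icc 0 1) (hYm : ∀ t i, Measurable[ℱ t] fun ω => Y t ω i)
    (t : ℕ) : ∫ ω, Real.exp (shortfall Q J Y t ω) ∂μ ≤ 1 := by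
  induction t with
  | zero => simp [shortfall]
  | succ t ih =>
    set E : Ω → ℝ := fun ω => (∑ i, Q t ω i * Y t ω i) / 2
    set G : Ω → ι → ℝ := fun ω i => Real.exp (shortfall Q J Y t ω + E ω - Y t ω i) with hG
    have measurable_exponent (i : ι) :
        Measurable[ℱ t] fun ω => shortfall Q J Y t ω + E ω - Y t ω i :=
      ((h.measurable_shortfall hYm t).add ((Finset.measurable_fun_sum _ fun i _ =>
        (h.measurable_strategy t i).mul (hYm t i)).div_const 2)).sub (hYm t i)
    have exponent_le (i : ι) (ω : Ω) : shortfall Q J Y t ω + E ω - Y t ω i ≤ t + 1 := by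
      simp only [E]
      linarith [shortfall_le (J := J) (h.strategy_mem · ω) (hY · ω) t,
        sum_mul_le_one (h.strategy_mem t ω) fun i => (hY t ω i).2, (hY t ω i).1]
    obtain ⟨integrable_sum, integral_eq⟩ := h.integral_apply_position
      (fun i => (measurable_exponent i).exp) fun i =>
        integrable_exp_of_le ((measurable_exponent i).mono (ℱ.le t) le_rfl).aemeasurable
          (exponent_le i)
    calc ∫ ω, Real.exp (shortfall Q J Y (t + 1) ω) ∂μ = ∫ ω, G ω (J t ω) ∂μ := by
          simp only [hG, E, shortfall, Finset.sum_range_succ, add_sub_assoc]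
      _ = ∫ ω, ∑ i, Q t ω i * G ω i ∂μ := integral_eq
      _ ≤ ∫ ω, Real.exp (shortfall Q J Y t ω) ∂μ := by
          refine integral_mono integrable_sum (h.integrable_exp_shortfall hY hYm t) fun ω => ?_
          calc ∑ i, Q t ω i * G ω i
              = Real.exp (shortfall Q J Y t ω + E ω) * ∑ i, Q t ω i * Real.exp (-Y t ω i) := by
                rw [Finset.mul_sum]
                exact Finset.sum_congr rfl fun i _ => by
                  rw [mul_left_comm, ← Real.exp_add, ← sub_eq_add_neg]
            _ ≤ Real.exp (shortfall Q J Y t ω + E ω) * Real.exp (-E ω) :=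
                mul_le_mul_of_nonneg_left (sum_mul_exp_neg_le_exp_neg_half_sum
                  (h.strategy_mem t ω) (hY t ω)) (Real.exp_pos _).le
            _ = Real.exp (shortfall Q J Y t ω) := by rw [← Real.exp_add, add_neg_cancel_right]
      _ ≤ 1 := ih

theorem measureReal_mul_lt_shortfall_le [IsProbabilityMeasure μ] (h : IsAllocation μ ℱ Q J)
    {b : ℝ} (hb : 0 < b) (hY : ∀ t ω i, Y t ω i ∈ Set.Icc 0 b)
    (hYm : ∀ t i, Measurable[ℱ t] fun ω => Y t ω i) (t : ℕ) (M : ℝ) :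
    μ.real {ω | b * M < shortfall Q J Y t ω} ≤ Real.exp (-M) := by
  set Z : ℕ → Ω → ι → ℝ := fun t ω i => Y t ω i / b with hZ
  have hZmem (t : ℕ) (ω : Ω) (i : ι) : Z t ω i ∈ Set.Icc 0 1 :=
    ⟨div_nonneg (hY t ω i).1 hb.le, (div_le_one hb).2 (hY t ω i).2⟩
  have hZm (t : ℕ) (i : ι) : Measurable[ℱ t] fun ω => Z t ω i := (hYm t i).div_const b
  have shortfall_div (ω : Ω) : shortfall Q J Z t ω = shortfall Q J Y t ω / b := by
    simp only [shortfall, hZ, ← mul_div_assoc, ← Finset.sum_div, div_right_comm _ b,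
      ← sub_div]
  calc μ.real {ω | b * M < shortfall Q J Y t ω} ≤ μ.real {ω | M ≤ shortfall Q J Z t ω} := by
        refine measureReal_mono fun ω hω => ?_
        rw [Set.mem_ofPred_eq, shortfall_div, le_div_iff₀' hb]
        exact le_of_lt hω
    _ ≤ Real.exp (-1 * M) * ProbabilityTheory.mgf (shortfall Q J Z t) μ 1 :=
        ProbabilityTheory.measure_ge_le_exp_mul_mgf M zero_le_one
          (by simpa only [one_mul] using h.integrable_exp_shortfall hZmem hZm t)
    _ ≤ Real.exp (-M) * 1 := by
        simp only [ProbabilityTheory.mgf, one_mul, neg_mul]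
        exact mul_le_mul_of_nonneg_left (h.integral_exp_shortfall_le_one hZmem hZm t)
          (Real.exp_pos _).le
    _ = Real.exp (-M) := mul_one _

end IsAllocation

/-- A lower bound for the `j`-th elementary symmetric polynomial of numbers in `[0, β]` with sum
`x`. -/
noncomputable def truncPow (β : ℝ) (j : ℕ) (x : ℝ) : ℝ :=
  max 0 (x - j * β) ^ j / j.factorial

theorem truncPow_succ_add_sub_le {β a : ℝ} (ha : a ∈ Set.Icc 0 β) (j : ℕ) (x : ℝ) :
    truncPow β (j + 1) (x + a) - truncPow β (j + 1) x ≤ a * truncPow β j x := by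
  set u := max 0 (x - (j + 1 : ℕ) * β)
  set v := max 0 (x + a - (j + 1 : ℕ) * β)
  have u_nonneg : 0 ≤ u := le_max_left _ _
  have u_le_v : u ≤ v := max_le_max le_rfl (by linarith [ha.1])
  have v_sub_u_le : v - u ≤ a := by
    rw [sub_le_iff_le_add]
    exact max_le (by linarith [ha.1]) (by linarith [le_max_right 0 (x - (j + 1 : ℕ) * β)])
  have v_le : v ≤ max 0 (x - j * β) := by
    refine max_le_max le_rfl ?_
    push_cast
    linarith [ha.2]
  have pow_sub_pow_le : v ^ (j + 1) - u ^ (j + 1) ≤ a * (j + 1 : ℕ) * max 0 (x - j * β) ^ j :=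
    calc v ^ (j + 1) - u ^ (j + 1) ≤ |v - u| * (j + 1 : ℕ) * max |v| |u| ^ (j + 1 - 1) :=
          (le_abs_self _).trans (abs_pow_sub_pow_le v u (j + 1))
      _ = (v - u) * (j + 1 : ℕ) * v ^ j := by
          rw [abs_of_nonneg (sub_nonneg.2 u_le_v), abs_of_nonneg u_nonneg,
            abs_of_nonneg (u_nonneg.trans u_le_v), max_eq_left u_le_v, Nat.add_sub_cancel]
      _ ≤ a * (j + 1 : ℕ) * max 0 (x - j * β) ^ j := by
          have := u_nonneg.trans u_le_v
          have := ha.1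
          gcongr
  calc truncPow β (j + 1) (x + a) - truncPow β (j + 1) x
      = (v ^ (j + 1) - u ^ (j + 1)) / (j + 1).factorial := by rw [truncPow, truncPow, sub_div]
    _ ≤ a * (j + 1 : ℕ) * max 0 (x - j * β) ^ j / (j + 1).factorial := by gcongr
    _ = a * truncPow β j x := by
        rw [truncPow, Nat.factorial_succ, Nat.cast_mul]
        field_simp

theorem truncPow_succ_sum_range_le {β : ℝ} {a : ℕ → ℝ} (ha : ∀ s, a s ∈ Set.Icc 0 β)
    (j t : ℕ) : truncPow β (j + 1) (∑ s ∈ range t, a s)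
      ≤ ∑ s ∈ range t, a s * truncPow β j (∑ u ∈ range s, a u) := by
  have β_nonneg : 0 ≤ β := (ha 0).1.trans (ha 0).2
  have truncPow_zero : truncPow β (j + 1) 0 = 0 := by
    rw [truncPow, max_eq_left, zero_pow j.succ_ne_zero, zero_div]
    rw [zero_sub, neg_nonpos]
    positivity
  calc truncPow β (j + 1) (∑ s ∈ range t, a s)
      = ∑ s ∈ range t, (truncPow β (j + 1) (∑ u ∈ range (s + 1), a u)
          - truncPow β (j + 1) (∑ u ∈ range s, a u)) := by
        rw [Finset.sum_range_sub fun s => truncPow β (j + 1) (∑ u ∈ range s, a u),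
          Finset.sum_range_zero, truncPow_zero, sub_zero]
    _ ≤ ∑ s ∈ range t, a s * truncPow β j (∑ u ∈ range s, a u) := by
        refine Finset.sum_le_sum fun s _ => ?_
        rw [Finset.sum_range_succ]
        exact truncPow_succ_add_sub_le (ha s) j _

theorem sum_mul_truncPow_succ_le {ι : Type*} [Fintype ι] {β : ℝ} {q : ℕ → ι → ℝ}
    (hq : ∀ s i, q s i ∈ Set.Icc 0 β) {g : ι → ℝ} (hg : 0 ≤ g) (j t : ℕ) :
    ∑ i, g i * truncPow β (j + 1) (∑ s ∈ range t, q s i)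
      ≤ ∑ s ∈ range t, ∑ i, g i * (q s i * truncPow β j (∑ u ∈ range s, q u i)) := by
  rw [Finset.sum_comm]
  simp only [← Finset.mul_sum]
  exact Finset.sum_le_sum fun i _ =>
    mul_le_mul_of_nonneg_left (truncPow_succ_sum_range_le (hq · i) j t) (hg i)

theorem convexOn_truncPow (β : ℝ) (j : ℕ) : ConvexOn ℝ Set.univ (truncPow β j) := by
  have convex_max : ConvexOn ℝ Set.univ fun x : ℝ => max 0 (x - j * β) :=
    (convexOn_const 0 convex_univ).sup
      ((convexOn_id convex_univ).sub (concaveOn_const _ convex_univ))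
  have convex_smul := (convex_max.pow (fun _ _ => le_max_left _ _) j).smul
    (inv_nonneg.2 (Nat.cast_nonneg (α := ℝ) j.factorial))
  refine convex_smul.congr fun x _ => ?_
  simp only [Pi.pow_apply, smul_eq_mul, truncPow, div_eq_inv_mul]

theorem card_mul_truncPow_div_card_le_sum {ι : Type*} [Fintype ι] (β : ℝ) (j : ℕ)
    (x : ι → ℝ) :
    Fintype.card ι * truncPow β j ((∑ i, x i) / Fintype.card ι) ≤ ∑ i, truncPow β j (x i) := by
  rcases isEmpty_or_nonempty ι with _ | _
  · simp
  have card_pos : (0 : ℝ) < Fintype.card ι := Nat.cast_pos.2 Fintype.card_pos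
  have jensen := (convexOn_truncPow β j).map_sum_le (t := univ)
    (w := fun _ : ι => (Fintype.card ι : ℝ)⁻¹) (p := x) (fun _ _ => by positivity)
    (by simp [card_pos.ne']) fun _ _ => Set.mem_univ _
  simp only [smul_eq_mul, ← Finset.mul_sum] at jensen
  rwa [← div_eq_inv_mul, ← div_eq_inv_mul, le_div_iff₀' card_pos] at jensen

section Counting

variable {Ω : Type*} {n : ℕ} (J : ℕ → Ω → Fin n)

theorem binLoad_succ (t : ℕ) (i : Fin n) (ω : Ω) :
    binLoad J (t + 1) i ω = binLoad J t i ω + if J t ω = i then 1 else 0 := by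
  unfold binLoad
  rw [Finset.range_add_one, Finset.filter_insert]
  split_ifs <;> simp

theorem binLoad_mono (i : Fin n) (ω : Ω) : Monotone fun t => binLoad J t i ω :=
  monotone_nat_of_le_succ fun t => by simp [binLoad_succ]

/-- The number of `j`-subsets of the balls in bin `i` at time `s`, weighted by `g i`; the load is
capped at `ℓ` to keep this reward bounded. -/
def subsetReward (ℓ : ℕ) (g : Fin n → ℝ) (j s : ℕ) (ω : Ω) (i : Fin n) : ℝ :=
  g i * (min (binLoad J s i ω) ℓ).choose j

/-- A new ball completes one `(j + 1)`-subset with each `j`-subset already present in its bin. -/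
theorem sum_subsetReward_position {ℓ t : ℕ} {ω : Ω} (hload : ∀ i, binLoad J t i ω ≤ ℓ)
    (g : Fin n → ℝ) (j : ℕ) :
    ∑ s ∈ range t, subsetReward J ℓ g j s ω (J s ω)
      = ∑ i, g i * (binLoad J t i ω).choose (j + 1) := by
  induction t with
  | zero => simp [binLoad]
  | succ t ih =>
    have hload_prev (i : Fin n) : binLoad J t i ω ≤ ℓ :=
      (binLoad_mono J i ω t.le_succ).trans (hload i)
    rw [Finset.sum_range_succ, ih hload_prev, ← eq_sub_iff_add_eq', ← Finset.sum_sub_distrib,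
      Finset.sum_eq_single (J t ω)]
    · rw [subsetReward, min_eq_left (hload_prev _), binLoad_succ, if_pos rfl, Nat.choose_succ_succ]
      push_cast
      ring
    · intro i _ hi
      rw [binLoad_succ, if_neg (Ne.symm hi), add_zero, sub_self]
    · simp

end Counting

open scoped Pointwise

theorem mem_Icc_pow_of_mem_pow {R : Type*} [Semiring R] [PartialOrder R] [IsOrderedRing R]
    [DecidableEq R] {s : Finset R} {b : R} (hs : ∀ x ∈ s, x ∈ Set.Icc 0 b) {r : ℕ} {x : R}
    (hx : x ∈ s ^ r) : x ∈ Set.Icc 0 (b ^ r) := by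
  induction r generalizing x with
  | zero =>
    rw [pow_zero, Finset.mem_one] at hx
    simp [hx]
  | succ r ih =>
    rw [pow_succ, Finset.mem_mul] at hx
    obtain ⟨y, hy, z, hz, rfl⟩ := hx
    obtain ⟨y_nonneg, y_le⟩ := ih hy
    obtain ⟨z_nonneg, z_le⟩ := hs z hz
    rw [pow_succ]
    exact ⟨mul_nonneg y_nonneg z_nonneg,
      mul_le_mul y_le z_le z_nonneg (y_nonneg.trans y_le)⟩

/-- The weight `g` collects the strategies already peeled off: the compensator of the rewards with
weight `g` is a sum over rounds `s` of counts with weight `g * Q s`, one subset size lower. The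
errors `β ^ (r + 1) * B` of the at most `T` rounds add up to at most `β ^ r * B`. -/
theorem sum_mul_truncPow_sub_le_sum_mul_choose {Ω : Type*} {n : ℕ} {J : ℕ → Ω → Fin n}
    {Q : ℕ → Ω → Fin n → ℝ} {pool : Finset (Fin n → ℝ)} {β B : ℝ} {T ℓ : ℕ} {ω : Ω}
    (hpool : ∀ ν ∈ pool, ν ∈ Set.Icc 0 (Function.const (Fin n) β)) (hQ : ∀ s, Q s ω ∈ pool)
    (hβ : 0 ≤ β) (hB : 0 ≤ B) (hTβ : T * β ≤ 1) (hload : ∀ i, binLoad J T i ω ≤ ℓ)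
    (hshort : ∀ r j, r + j + 1 = ℓ → ∀ g ∈ pool ^ r, ∀ t ≤ T,
      shortfall Q J (subsetReward J ℓ g j) t ω ≤ β ^ r * B)
    {j r : ℕ} (hrj : r + j = ℓ) {g : Fin n → ℝ} (hg : g ∈ pool ^ r) {t : ℕ} (ht : t ≤ T) :
    (1 / 2) ^ j * ∑ i, g i * truncPow β j (∑ s ∈ range t, Q s ω i) - 2 * (β ^ r * B)
      ≤ ∑ i, g i * (binLoad J t i ω).choose j := by
  induction j generalizing r g t with
  | zero =>
    have error_nonneg : 0 ≤ β ^ r * B := by positivity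
    simp [truncPow, error_nonneg]
  | succ j ih =>
    have hload_le {s : ℕ} (hs : s ≤ T) (i : Fin n) : binLoad J s i ω ≤ ℓ :=
      (binLoad_mono J i ω hs).trans (hload i)
    have compensator_ge : ∀ s ∈ range t,
        (1 / 2) ^ j * ∑ i, g i * (Q s ω i * truncPow β j (∑ u ∈ range s, Q u ω i))
          - 2 * (β ^ (r + 1) * B) ≤ ∑ i, Q s ω i * subsetReward J ℓ g j s ω i := by
      intro s hs
      have hsT : s ≤ T := (mem_range.1 hs).le.trans ht
      have hgQ : g * Q s ω ∈ pool ^ (r + 1) := pow_succ pool r ▸ Finset.mul_mem_mul hg (hQ s)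
      refine (ih (by omega) hgQ hsT).trans' (by simp only [Pi.mul_apply, mul_assoc, le_rfl])
        |>.trans_eq (Finset.sum_congr rfl fun i _ => ?_)
      rw [subsetReward, min_eq_left (hload_le hsT i), Pi.mul_apply, mul_left_comm, mul_assoc]
    have potential_le : ∑ i, g i * truncPow β (j + 1) (∑ s ∈ range t, Q s ω i)
        ≤ ∑ s ∈ range t, ∑ i, g i * (Q s ω i * truncPow β j (∑ u ∈ range s, Q u ω i)) :=
      sum_mul_truncPow_succ_le (fun s i => ⟨(hpool _ (hQ s)).1 i, (hpool _ (hQ s)).2 i⟩)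
        (mem_Icc_pow_of_mem_pow hpool hg).1 j t
    have errors_le : t * (β ^ (r + 1) * B) ≤ β ^ r * B :=
      calc t * (β ^ (r + 1) * B) = (t * β) * (β ^ r * B) := by ring
        _ ≤ β ^ r * B := mul_le_of_le_one_left (by positivity)
            ((mul_le_mul_of_nonneg_right (Nat.cast_le.2 ht) hβ).trans hTβ)
    have shortfall_le := hshort r j (by omega) g hg t ht
    rw [shortfall, Finset.sum_sub_distrib, sum_subsetReward_position J (hload_le ht),
      ← Finset.sum_div] at shortfall_le
    have total_ge := Finset.sum_le_sum compensator_ge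
    rw [Finset.sum_sub_distrib, ← Finset.mul_sum, Finset.sum_const, card_range,
      nsmul_eq_mul] at total_ge
    have := mul_le_mul_of_nonneg_left potential_le (by positivity : (0 : ℝ) ≤ (1 / 2) ^ j)
    rw [pow_succ (1 / 2 : ℝ) j]
    linarith

/-- The event that the rewards for subsets fall well short of their compensator for some subset
size below `ℓ`, some product of strategies of the pool as weight, and some time up to `T`. -/
def shortfallEvent {Ω : Type*} {n : ℕ} (Q : ℕ → Ω → Fin n → ℝ) (J : ℕ → Ω → Fin n)
    (pool : Finset (Fin n → ℝ)) (ℓ T : ℕ) (β B : ℝ) : Set Ω :=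
  ⋃ r ∈ range ℓ, ⋃ t ∈ range (T + 1), ⋃ g ∈ pool ^ r,
    {ω | β ^ r * B < shortfall Q J (subsetReward J ℓ g (ℓ - 1 - r)) t ω}

theorem exists_le_binLoad_of_notMem_shortfallEvent {Ω : Type*} {n : ℕ} {J : ℕ → Ω → Fin n}
    {Q : ℕ → Ω → Fin n → ℝ} {pool : Finset (Fin n → ℝ)} {β B : ℝ} {T ℓ : ℕ} {ω : Ω}
    (hpool : ∀ ν ∈ pool, ν ∈ Set.Icc 0 (Function.const (Fin n) β)) (hQ : ∀ s, Q s ω ∈ pool)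
    (hQ1 : ∀ s, ∑ i, Q s ω i = 1) (hβ : 0 ≤ β) (hB : 0 ≤ B) (hTβ : T * β ≤ 1)
    (hω : ω ∉ shortfallEvent Q J pool ℓ T β B)
    (hlarge : 2 * 2 ^ ℓ * B < n * truncPow β ℓ (T / n)) : ∃ i, ℓ ≤ binLoad J T i ω := by
  by_contra! hload
  have shortfall_le : ∀ r j, r + j + 1 = ℓ → ∀ g ∈ pool ^ r, ∀ t ≤ T,
      shortfall Q J (subsetReward J ℓ g j) t ω ≤ β ^ r * B := by
    intro r j hrj g hg t ht
    by_contra! hlt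
    refine hω ?_
    simp only [shortfallEvent, Set.mem_iUnion]
    exact ⟨r, mem_range.2 (by omega), t, mem_range.2 (by omega), g, hg,
      by rwa [show ℓ - 1 - r = j by omega]⟩
  have count_ge := sum_mul_truncPow_sub_le_sum_mul_choose hpool hQ hβ hB hTβ
    (fun i => (hload i).le) shortfall_le (zero_add ℓ) (by simp : 1 ∈ pool ^ 0) le_rfl
  have count_eq_zero : ∑ i, (1 : Fin n → ℝ) i * ((binLoad J T i ω).choose ℓ : ℝ) = 0 :=
    Finset.sum_eq_zero fun i _ => by rw [Nat.choose_eq_zero_of_lt (hload i)]; simp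
  have potential_ge := card_mul_truncPow_div_card_le_sum β ℓ fun i => ∑ s ∈ range T, Q s ω i
  rw [Finset.sum_comm] at potential_ge
  simp only [hQ1, Finset.sum_const, card_range, nsmul_eq_mul, mul_one, Fintype.card_fin]
    at potential_ge
  rw [count_eq_zero, sub_nonpos] at count_ge
  simp only [Pi.one_apply, one_mul, pow_zero, one_div, inv_pow] at count_ge
  rw [inv_mul_le_iff₀ (by positivity)] at count_ge
  linarith

namespace IsAllocation

variable {Ω : Type*} {mΩ : MeasurableSpace Ω} {μ : Measure Ω} {n : ℕ}
  {ℱ : Filtration ℕ mΩ} {Q : ℕ → Ω → Fin n → ℝ} {J : ℕ → Ω → Fin n} {pool : Finset (Fin n → ℝ)}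
  {m : ℕ}

theorem measurable_binLoad (h : IsAllocation μ ℱ Q J) (t : ℕ) (i : Fin n) :
    Measurable[ℱ t] (binLoad J t i) := by
  induction t with
  | zero =>
    have binLoad_zero : binLoad J 0 i = fun _ => 0 := by ext; simp [binLoad]
    exact binLoad_zero ▸ measurable_const
  | succ t ih =>
    rw [funext (binLoad_succ J t i)]
    exact (ih.mono (ℱ.mono t.le_succ) le_rfl).add
      ((measurable_of_countable fun j => if j = i then 1 else 0).comp (h.measurable_position t))

theorem measureReal_shortfallEvent_le [IsProbabilityMeasure μ] (h : IsAllocation μ ℱ Q J)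
    {β : ℝ} (hβ : 0 < β) (hpool : ∀ ν ∈ pool, ν ∈ Set.Icc 0 (Function.const (Fin n) β))
    (hcard : #pool ≤ 2 ^ m) (ℓ T : ℕ) (M : ℝ) :
    μ.real (shortfallEvent Q J pool ℓ T β (2 ^ ℓ * M))
      ≤ ℓ * (T + 1) * 2 ^ (m * ℓ) * Real.exp (-M) := by
  have shortfall_le (r t : ℕ) (g : Fin n → ℝ) (hg : g ∈ pool ^ r) :
      μ.real {ω | β ^ r * (2 ^ ℓ * M) < shortfall Q J (subsetReward J ℓ g (ℓ - 1 - r)) t ω}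
        ≤ Real.exp (-M) := by
    obtain ⟨g_nonneg, g_le⟩ := mem_Icc_pow_of_mem_pow hpool hg
    simp only [← mul_assoc]
    refine h.measureReal_mul_lt_shortfall_le (by positivity) (fun s ω i => ⟨?_, ?_⟩)
      (fun s i => ?_) t M
    · exact mul_nonneg (g_nonneg i) (Nat.cast_nonneg _)
    · refine mul_le_mul (g_le i) ?_ (Nat.cast_nonneg _) (by positivity)
      exact_mod_cast (Nat.choose_le_two_pow _ _).trans
        (Nat.pow_le_pow_right two_pos (min_le_right _ _))
    · exact (measurable_of_countable fun N : ℕ => g i * ((min N ℓ).choose (ℓ - 1 - r) : ℝ)).comp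
        (h.measurable_binLoad s i)
  have card_pow_le (r : ℕ) (hr : r ∈ range ℓ) : (#(pool ^ r) : ℝ) ≤ 2 ^ (m * ℓ) := by
    have : #(pool ^ r) ≤ 2 ^ (m * ℓ) :=
      calc #(pool ^ r) ≤ #pool ^ r := Finset.card_pow_le
        _ ≤ (2 ^ m) ^ r := Nat.pow_le_pow_left hcard r
        _ ≤ (2 ^ m) ^ ℓ := Nat.pow_le_pow_right (by positivity) (mem_range.1 hr).le
        _ = 2 ^ (m * ℓ) := (pow_mul 2 m ℓ).symm
    exact_mod_cast this
  calc μ.real (shortfallEvent Q J pool ℓ T β (2 ^ ℓ * M))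
      ≤ ∑ r ∈ range ℓ, ∑ _t ∈ range (T + 1), ∑ _g ∈ pool ^ r, Real.exp (-M) := by
        refine (measureReal_biUnion_finset_le _ _).trans (Finset.sum_le_sum fun r _ => ?_)
        refine (measureReal_biUnion_finset_le _ _).trans (Finset.sum_le_sum fun t _ => ?_)
        exact (measureReal_biUnion_finset_le _ _).trans (Finset.sum_le_sum (shortfall_le r t))
    _ ≤ ∑ _r ∈ range ℓ, ∑ _t ∈ range (T + 1), 2 ^ (m * ℓ) * Real.exp (-M) := by
        refine Finset.sum_le_sum fun r hr => Finset.sum_le_sum fun t _ => ?_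
        rw [Finset.sum_const, nsmul_eq_mul]
        exact mul_le_mul_of_nonneg_right (card_pow_le r hr) (Real.exp_pos _).le
    _ = ℓ * (T + 1) * 2 ^ (m * ℓ) * Real.exp (-M) := by
        simp only [Finset.sum_const, card_range, nsmul_eq_mul]
        push_cast
        ring

theorem one_sub_le_measureReal_exists_le_binLoad [IsProbabilityMeasure μ]
    (h : IsAllocation μ ℱ Q J) (hQ : ∀ t ω, Q t ω ∈ pool) {β : ℝ} (hβ : 0 < β)
    (hpool : ∀ ν ∈ pool, ν ∈ Set.Icc 0 (Function.const (Fin n) β)) (hcard : #pool ≤ 2 ^ m)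
    {T ℓ : ℕ} (hTβ : T * β ≤ 1) {M : ℝ} (hM : 0 ≤ M)
    (hlarge : 2 * 4 ^ ℓ * M < n * truncPow β ℓ (T / n)) :
    1 - ℓ * (T + 1) * 2 ^ (m * ℓ) * Real.exp (-M) ≤ μ.real {ω | ∃ i, ℓ ≤ binLoad J T i ω} := by
  set bad := shortfallEvent Q J pool ℓ T β (2 ^ ℓ * M)
  have compl_subset : badᶜ ⊆ {ω | ∃ i, ℓ ≤ binLoad J T i ω} := fun ω hω =>
    exists_le_binLoad_of_notMem_shortfallEvent hpool (hQ · ω) (fun s => (h.strategy_mem s ω).2)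
      hβ.le (by positivity) hTβ hω (by
        rwa [← mul_assoc, mul_assoc 2, ← mul_pow, show (2 * 2 : ℝ) = 4 by norm_num])
  have one_le : 1 ≤ μ.real bad + μ.real badᶜ := by
    rw [← probReal_univ (μ := μ), ← Set.union_compl_self bad]
    exact measureReal_union_le _ _
  linarith [measureReal_mono (μ := μ) compl_subset,
    h.measureReal_shortfallEvent_le hβ hpool hcard ℓ T M]

end IsAllocation

theorem mul_two_pow_mul_exp_neg_le_exp_neg {m ℓ : ℕ} (hℓ : 1 ≤ ℓ) (hℓm : ℓ ≤ m) {N : ℝ}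
    (hN : N ≤ 2 * Real.exp m) :
    ℓ * N * 2 ^ (m * ℓ) * Real.exp (-(4 * m * ℓ)) ≤ Real.exp (-m) := by
  have two_pow_le : (2 : ℝ) ^ (m * ℓ) ≤ Real.exp (m * ℓ) := by
    have := pow_le_pow_left₀ zero_le_two Real.exp_one_gt_two.le (m * ℓ)
    rwa [← Real.exp_nat_mul, mul_one, Nat.cast_mul] at this
  have two_mul_le : 2 * (ℓ : ℝ) ≤ Real.exp m :=
    (mul_le_mul_of_nonneg_left (Nat.cast_le.2 hℓm) zero_le_two).trans Real.two_mul_le_exp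
  calc ℓ * N * 2 ^ (m * ℓ) * Real.exp (-(4 * m * ℓ))
      ≤ ℓ * (2 * Real.exp m) * Real.exp (m * ℓ) * Real.exp (-(4 * m * ℓ)) := by gcongr
    _ = 2 * ℓ * (Real.exp m * Real.exp (m * ℓ) * Real.exp (-(4 * m * ℓ))) := by ring
    _ ≤ Real.exp m * (Real.exp m * Real.exp (m * ℓ) * Real.exp (-(4 * m * ℓ))) := by gcongr
    _ = Real.exp (m + (m + m * ℓ + -(4 * m * ℓ))) := by simp only [Real.exp_add]
    _ ≤ Real.exp (-m) := by
        refine Real.exp_le_exp.2 ?_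
        linarith [le_mul_of_one_le_right (Nat.cast_nonneg' (α := ℝ) m) (Nat.one_le_cast.2 hℓ)]

theorem one_div_pow_le_truncPow_natDiv {n k ℓ : ℕ} (hk : 1 ≤ k) (hℓ : 1 ≤ ℓ)
    (hn : 4 * ℓ * k ^ 2 ≤ n) :
    (1 / (2 * k * ℓ) : ℝ) ^ ℓ ≤ truncPow (k / n) ℓ ((n / k : ℕ) / n) := by
  have n_pos : 0 < n := hn.trans_lt' (by positivity)
  have n_lt : n < (n / k + 1) * k := by
    rw [add_one_mul]
    exact Nat.lt_div_mul_add hk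
  have gap_ge : (1 / (2 * k) : ℝ) ≤ (n / k : ℕ) / n - ℓ * (k / n) := by
    rw [mul_div_assoc', ← sub_div, div_le_div_iff₀ (by positivity) (by positivity)]
    have : n + 2 * (ℓ * k ^ 2) ≤ 2 * (n / k) * k := by
      nlinarith [Nat.mul_le_mul_left k (Nat.mul_le_mul hℓ hk)]
    have : (n + 2 * (ℓ * k ^ 2) : ℝ) ≤ 2 * (n / k : ℕ) * k := by exact_mod_cast this
    linarith
  calc (1 / (2 * k * ℓ) : ℝ) ^ ℓ = (1 / (2 * k)) ^ ℓ / ℓ ^ ℓ := by rw [← div_div, div_pow]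
    _ ≤ (1 / (2 * k)) ^ ℓ / ℓ.factorial := by
        gcongr
        exact_mod_cast Nat.factorial_le_pow ℓ
    _ ≤ truncPow (k / n) ℓ ((n / k : ℕ) / n) := by
        rw [truncPow]
        gcongr
        exact gap_ge.trans (le_max_right _ _)

theorem IsAllocation.one_sub_exp_neg_le_measureReal_exists_le_binLoad_div {Ω : Type*}
    {mΩ : MeasurableSpace Ω} {μ : Measure Ω} [IsProbabilityMeasure μ] {n k m ℓ : ℕ}
    {ℱ : Filtration ℕ mΩ} {Q : ℕ → Ω → Fin n → ℝ} {J : ℕ → Ω → Fin n}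
    {pool : Finset (Fin n → ℝ)} (h : IsAllocation μ ℱ Q J) (hQ : ∀ t ω, Q t ω ∈ pool)
    (hpool : ∀ ν ∈ pool, ν ∈ Set.Icc 0 (Function.const (Fin n) (k / n : ℝ)))
    (hcard : #pool ≤ 2 ^ m) (hk : 1 ≤ k) (hℓ : 1 ≤ ℓ) (hℓm : ℓ ≤ m) (hnm : Real.log n ≤ m)
    (hn : 4 * ℓ * k ^ 2 ≤ n) (hlarge : 8 * m * ℓ * (8 * k * ℓ) ^ ℓ < n) :
    1 - Real.exp (-m) ≤ μ.real {ω | ∃ i, ℓ ≤ binLoad J (n / k) i ω} := by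
  have n_pos : 0 < n := hn.trans_lt' (by positivity)
  have n_le_exp : (n : ℝ) ≤ Real.exp m := (Real.log_le_iff_le_exp (Nat.cast_pos.2 n_pos)).1 hnm
  have rounds_le : ((n / k : ℕ) + 1 : ℝ) ≤ 2 * Real.exp m := by
    have : ((n / k : ℕ) + 1 : ℝ) ≤ n + n := by
      exact_mod_cast add_le_add (Nat.div_le_self n k) n_pos
    linarith
  have rounds_mul_le : ((n / k : ℕ) : ℝ) * (k / n) ≤ 1 := by
    rw [mul_div_assoc', div_le_one (Nat.cast_pos.2 n_pos)]
    exact_mod_cast Nat.div_mul_le_self n k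
  have potential_gt : 2 * 4 ^ ℓ * (4 * m * ℓ : ℝ) < n * truncPow (k / n) ℓ ((n / k : ℕ) / n) :=
    calc 2 * 4 ^ ℓ * (4 * m * ℓ : ℝ)
        = 8 * m * ℓ * (8 * k * ℓ) ^ ℓ * (1 / (2 * k * ℓ)) ^ ℓ := by
          rw [mul_assoc (8 * m * ℓ : ℝ), ← mul_pow,
            show (8 * k * ℓ : ℝ) * (1 / (2 * k * ℓ)) = 4 by field_simp; norm_num]
          ring
      _ < n * (1 / (2 * k * ℓ)) ^ ℓ :=
          mul_lt_mul_of_pos_right (by exact_mod_cast hlarge) (by positivity)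
      _ ≤ n * truncPow (k / n) ℓ ((n / k : ℕ) / n) :=
          mul_le_mul_of_nonneg_left (one_div_pow_le_truncPow_natDiv hk hℓ hn) (Nat.cast_nonneg _)
  linarith [mul_two_pow_mul_exp_neg_le_exp_neg hℓ hℓm rounds_le,
    h.one_sub_le_measureReal_exists_le_binLoad hQ (by positivity) hpool hcard rounds_mul_le
      (by positivity) potential_gt]

theorem pow_natCeil_logb_le {b y : ℝ} (hb : 1 < b) (hy : 1 ≤ y) :
    b ^ ⌈Real.logb b y⌉₊ ≤ y * b :=
  calc b ^ ⌈Real.logb b y⌉₊ = b ^ (⌈Real.logb b y⌉₊ : ℝ) := (Real.rpow_natCast _ _).symm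
    _ ≤ b ^ (Real.logb b y + 1) := Real.rpow_le_rpow_of_exponent_le hb.le
        (Nat.ceil_lt_add_one (Real.logb_nonneg hb hy)).le
    _ = y * b := by
        rw [Real.rpow_add_one (by positivity),
          Real.rpow_logb (by positivity) hb.ne' (by positivity)]

theorem eventually_rpow_log_le_rpow (C : ℝ) {s : ℝ} (hs : 0 < s) :
    ∀ᶠ x : ℝ in Filter.atTop, Real.log x ^ C ≤ x ^ s := by
  filter_upwards [(isLittleO_log_rpow_rpow_atTop C hs).bound one_pos,
    Filter.eventually_ge_atTop 1] with x bound hx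
  rwa [one_mul, Real.norm_of_nonneg (Real.rpow_nonneg (Real.log_nonneg hx) C),
    Real.norm_of_nonneg (by positivity)] at bound

theorem eventually_exists_load_level {ε : ℝ} (hε0 : 0 < ε) (hε1 : ε < 1) :
    ∀ᶠ R : ℝ in Filter.atTop, ∀ k : ℕ, 1 ≤ k → (k : ℝ) ≤ R ^ (ε / 2) →
      ∃ ℓ : ℕ, 1 ≤ ℓ ∧ (1 - ε) * Real.log R / (Real.log k + Real.log (Real.log R)) ≤ ℓ ∧
        8 * ℓ ≤ Real.log R ∧ Real.log R * (k * Real.log R) ^ ℓ < R := by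
  filter_upwards [Real.tendsto_log_atTop.eventually_ge_atTop 16,
    (Real.tendsto_log_atTop.comp Real.tendsto_log_atTop).eventually_ge_atTop 16,
    eventually_rpow_log_le_rpow 3 (half_pos hε0), Filter.eventually_gt_atTop 1]
    with R log_ge loglog_ge log_cube_le R_gt k hk hkR
  rw [Function.comp_apply] at loglog_ge
  have k_ge : (1 : ℝ) ≤ k := by exact_mod_cast hk
  have base_gt : 1 < k * Real.log R := by nlinarith
  set x := (1 - ε) * Real.log R / (Real.log k + Real.log (Real.log R)) with hx
  have x_pos : 0 < x := by
    have := Real.log_nonneg k_ge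
    have := sub_pos.2 hε1
    positivity
  have x_le : x ≤ Real.log R / 16 :=
    div_le_div₀ (by linarith) (mul_le_of_le_one_left (by linarith) (by linarith)) (by norm_num)
      (by linarith [Real.log_nonneg k_ge])
  have x_eq : x = Real.logb (k * Real.log R) (R ^ (1 - ε)) := by
    rw [hx, Real.logb, Real.log_rpow (by linarith), Real.log_mul (by linarith) (by linarith)]
  refine ⟨⌈x⌉₊, Nat.one_le_ceil_iff.2 x_pos, Nat.le_ceil x,
    by linarith [Nat.ceil_lt_add_one x_pos.le], ?_⟩
  calc Real.log R * (k * Real.log R) ^ ⌈x⌉₊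
      ≤ Real.log R * (R ^ (1 - ε) * (k * Real.log R)) := by
        rw [x_eq]
        exact mul_le_mul_of_nonneg_left (pow_natCeil_logb_le base_gt
          (Real.one_le_rpow R_gt.le (sub_pos.2 hε1).le)) (by linarith)
    _ = R ^ (1 - ε) * k * Real.log R ^ 2 := by ring
    _ ≤ R ^ (1 - ε) * R ^ (ε / 2) * Real.log R ^ 2 := by gcongr
    _ < R ^ (1 - ε) * R ^ (ε / 2) * R ^ (ε / 2) := by
        have log_sq_lt : Real.log R ^ 2 < R ^ (ε / 2) :=
          (pow_lt_pow_right₀ (by linarith) (by norm_num : 2 < 3)).trans_le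
            (by exact_mod_cast log_cube_le)
        gcongr
    _ = R := by
        rw [← Real.rpow_add (by linarith), ← Real.rpow_add (by linarith),
          show 1 - ε + ε / 2 + ε / 2 = 1 by ring, Real.rpow_one]

theorem eventually_ratio_exists_admissible_level {ε : ℝ} (hε0 : 0 < ε) (hε1 : ε < 1) :
    ∀ᶠ R : ℝ in Filter.atTop, ∀ n k m : ℕ, (n : ℝ) / m = R → Real.log n ≤ m → 1 ≤ k →
      (k : ℝ) ≤ R ^ (ε / 2) →
      ∃ ℓ : ℕ, 1 ≤ ℓ ∧ ℓ ≤ m ∧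
        (1 - ε) * Real.log R / (Real.log k + Real.log (Real.log R)) ≤ ℓ ∧
        4 * ℓ * k ^ 2 ≤ n ∧ 8 * m * ℓ * (8 * k * ℓ) ^ ℓ < n := by
  filter_upwards [eventually_exists_load_level hε0 hε1, Filter.eventually_gt_atTop 1]
    with R exists_level R_gt n k m hR hnm hk hkR
  obtain ⟨ℓ, hℓ, level_le, level_le_log, pow_level_lt⟩ := exists_level k hk hkR
  have m_pos : 0 < m := by
    rw [pos_iff_ne_zero]
    rintro rfl
    norm_num [← hR] at R_gt
  have n_eq : (n : ℝ) = m * R := by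
    rw [← hR]
    field_simp
  have log_le : Real.log R ≤ m := by
    refine (Real.log_le_log (by linarith) ?_).trans hnm
    exact hR ▸ div_le_self (Nat.cast_nonneg n) (by exact_mod_cast m_pos)
  have level_le_m : 8 * ℓ ≤ m := by exact_mod_cast level_le_log.trans log_le
  refine ⟨ℓ, hℓ, by omega, level_le, ?_, ?_⟩
  · have k_sq_le : (k : ℝ) ^ 2 ≤ R :=
      calc (k : ℝ) ^ 2 ≤ (R ^ (ε / 2)) ^ 2 := by gcongr
        _ = R ^ ε := by rw [← Real.rpow_mul_natCast (by linarith)]; norm_num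
        _ ≤ R := Real.rpow_le_self_of_one_le R_gt.le hε1.le
    have : (4 * ℓ * k ^ 2 : ℝ) ≤ n := by
      rw [n_eq]
      gcongr
      exact_mod_cast (by omega : 4 * ℓ ≤ m)
    exact_mod_cast this
  · have : (8 * m * ℓ * (8 * k * ℓ) ^ ℓ : ℝ) < n :=
      calc (8 * m * ℓ * (8 * k * ℓ) ^ ℓ : ℝ) = m * (8 * ℓ * (k * (8 * ℓ)) ^ ℓ) := by ring
        _ ≤ m * (Real.log R * (k * Real.log R) ^ ℓ) := by
            have := Real.log_nonneg R_gt.le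
            gcongr
        _ < m * R := by gcongr
        _ = n := n_eq.symm
    exact_mod_cast this

theorem rpow_le_div_of_le_rpow_one_sub {x y δ : ℝ} (hx : 0 < x) (hy : 0 < y)
    (h : y ≤ x ^ (1 - δ)) : x ^ δ ≤ x / y := by
  rw [le_div_iff₀ hy]
  calc x ^ δ * y ≤ x ^ δ * x ^ (1 - δ) := by gcongr
    _ = x := by rw [← Real.rpow_add hx, add_sub_cancel, Real.rpow_one]

theorem eventually_le_div_and_rpow_log_le {δ η : ℝ} (hδ : 0 < δ) (hη : 0 < η) (C R₀ : ℝ) :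
    ∀ᶠ x : ℝ in Filter.atTop, ∀ y, 0 < y → y ≤ x ^ (1 - δ) →
      R₀ ≤ x / y ∧ Real.log x ^ C ≤ (x / y) ^ η := by
  filter_upwards [(tendsto_rpow_atTop hδ).eventually_ge_atTop R₀,
    eventually_rpow_log_le_rpow C (mul_pos hδ hη), Filter.eventually_gt_atTop 0]
    with x rpow_ge log_le x_pos y hy hyx
  have ratio_ge := rpow_le_div_of_le_rpow_one_sub x_pos hy hyx
  refine ⟨rpow_ge.trans ratio_ge, log_le.trans ?_⟩
  rw [Real.rpow_mul x_pos.le]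
  gcongr

theorem load_lower_bound_polylog_general {ε : ℝ} (hε0 : 0 < ε) (hε1 : ε < 1) :
    ∃ R₀ : ℝ, ∀ n k m : ℕ, Real.log n ≤ m → R₀ ≤ (n : ℝ) / m →
      1 ≤ k → (k : ℝ) ≤ ((n : ℝ) / m) ^ (ε / 2) →
    ∀ {Ω : Type*} {mΩ : MeasurableSpace Ω} {μ : Measure Ω} [IsProbabilityMeasure μ]
      {ℱ : Filtration ℕ mΩ} {Q : ℕ → Ω → Fin n → ℝ} {J : ℕ → Ω → Fin n}
      {pool : Finset (Fin n → ℝ)}, IsAllocation μ ℱ Q J → #pool ≤ 2 ^ m →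
      (∀ ν ∈ pool, ν ∈ Set.Icc 0 (Function.const (Fin n) (k / n : ℝ))) →
      (∀ t ω, Q t ω ∈ pool) →
      1 - Real.exp (-m)
        ≤ μ.real {ω | ∃ i, (1 - ε) * Real.log ((n : ℝ) / m)
              / (Real.log k + Real.log (Real.log ((n : ℝ) / m)))
            ≤ binLoad J (n / k) i ω} := by
  obtain ⟨R₀, hR₀⟩ := Filter.eventually_atTop.1 (eventually_ratio_exists_admissible_level hε0 hε1)
  refine ⟨R₀, fun n k m hnm hR hk hkR Ω _ μ _ ℱ Q J pool h hcard hpool hQ => ?_⟩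
  obtain ⟨ℓ, hℓ, hℓm, level_le, hn, hlarge⟩ := hR₀ _ hR n k m rfl hnm hk hkR
  refine (h.one_sub_exp_neg_le_measureReal_exists_le_binLoad_div hQ hpool hcard hk hℓ hℓm hnm hn
    hlarge).trans (measureReal_mono ?_)
  rintro ω ⟨i, hi⟩
  exact ⟨i, level_le.trans (Nat.cast_le.2 hi)⟩

/-- Theorem 2 of the paper: fix `δ ∈ (0,1)`, `C > 0` and `ε ∈ (0, δ/2)`. For all large `n`,
in the relaxed adaptive allocation model placing `⌊n/k⌋` balls into `n` bins with pool of
at most `2^m` strategies (point masses at most `k/n`), `log n ≤ m ≤ n^{1-δ}` and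
`2 ≤ k ≤ (log n)^C`, with probability at least `1 - e^{-m}` the maximal load after `⌊n/k⌋`
rounds is at least `(1-ε) log(n/m) / (log k + log log (n/m))`. -/
theorem load_lower_bound_polylog
    (δ C ε : ℝ) (hδ0 : 0 < δ) (hδ1 : δ < 1) (hC : 0 < C)
    (hε0 : 0 < ε) (hε1 : ε < δ / 2) :
    ∃ n₀ : ℕ, ∀ n : ℕ, n₀ ≤ n → ∀ k m : ℕ,
      Real.log n ≤ m → (m : ℝ) ≤ (n : ℝ) ^ (1 - δ) →
      2 ≤ k → (k : ℝ) ≤ (Real.log n) ^ C →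
    ∀ (Ω : Type) (_ : MeasurableSpace Ω) (μ : Measure Ω), IsProbabilityMeasure μ →
    ∀ (ℱ : Filtration ℕ ‹MeasurableSpace Ω›)
      (pool : Finset (Fin n → ℝ)), pool.card ≤ 2 ^ m →
      (∀ ν ∈ pool, ∀ i, 0 ≤ ν i) →
      (∀ ν ∈ pool, ∑ i, ν i = 1) →
      (∀ ν ∈ pool, ∀ i, ν i ≤ (k : ℝ) / n) →
    ∀ (Q : ℕ → Ω → Fin n → ℝ) (J : ℕ → Ω → Fin n),
      (∀ t ω, Q t ω ∈ pool) →
      (∀ t i, Measurable[ℱ t] fun ω => Q t ω i) →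
      (∀ t, Measurable[ℱ (t + 1)] (J t)) →
      (∀ t i, (μ[(fun ω => if J t ω = i then (1 : ℝ) else 0) | ℱ t])
          =ᵐ[μ] fun ω => Q t ω i) →
      1 - Real.exp (-(m : ℝ))
        ≤ (μ {ω | ∃ i, (1 - ε) * Real.log ((n : ℝ) / m)
              / (Real.log k + Real.log (Real.log ((n : ℝ) / m)))
            ≤ (binLoad J (n / k) i ω : ℝ)}).toReal := by
  obtain ⟨R₀, hR₀⟩ := load_lower_bound_polylog_general hε0 (by linarith : ε < 1)
  obtain ⟨n₀, hn₀⟩ := Filter.eventually_atTop.1 (tendsto_natCast_atTop_atTop.eventually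
    ((eventually_le_div_and_rpow_log_le hδ0 (half_pos hε0) C R₀).and
      (Filter.eventually_gt_atTop 1)))
  refine ⟨n₀, fun n hn k m hnm hmn hk hkC Ω _ μ _ ℱ pool hcard h0 h1 hβ Q J hQ hQm hJ hcond => ?_⟩
  obtain ⟨ratio, n_gt⟩ := hn₀ n hn
  obtain ⟨ratio_ge, log_rpow_le⟩ := ratio m ((Real.log_pos n_gt).trans_le hnm) hmn
  exact hR₀ n k m hnm ratio_ge (by omega) (hkC.trans log_rpow_le)
    ⟨fun t ω => ⟨h0 _ (hQ t ω), h1 _ (hQ t ω)⟩, hQm, hJ, hcond⟩ hcard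
    (fun ν hν => ⟨h0 ν hν, hβ ν hν⟩) hQ
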